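/- arXiv:1512.07544 — 2 statements merged into one kernel-verified Lean document; each statement's English description precedes it below -/
import Mathlib

section
/- For every point Ω ∈ ℌ_g, the stabilizer {γ ∈ Sp(2g, ℤ) : γ · Ω = Ω} of Ω in Sp(2g, ℤ) is a finite set, where γ = (a b; c d) acts by γ · Ω = (aΩ + b)(cΩ + d)⁻¹. -/
/-! For `γ = (a b; c d)` fixing `Ω = X + iY`, put `D = cΩ + d`. Then `aΩ + b = ΩD`, that is,
`γ P = P D` for the `2g × g` matrix `P = (Ω; 1)`. Since `γ` is real and symplectic,
`Dᴴ (Pᴴ J P) D = Pᴴ J P`, and `Pᴴ J P = Ωᴴ - Ω = -2iY`, so `D` is unitary for the Hermitian form `Y`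
(`conjTranspose_mul_im_mul`). Writing `Y = BᴴB` with `B` invertible, the entries of `B D` are bounded
in terms of `Y` (`norm_apply_le_of_conjTranspose_mul_self`). The blocks of `γ` are recovered
continuously from `D`: `cΩ + d = D` forces `c = (Im D) Y⁻¹` and `d = Re D - c X`, and similarly `a, b`
from `ΩD` (`eq_of_mul_add_eq`). Hence the stabilizer consists of integral matrices lying in a compact
set of real matrices, and there are only finitely many of those
(`finite_intMatrix_of_isCompact`). -/

open Matrix

/-- The Siegel upper half space of genus `g`. -/
def SiegelUpperHalfSpace (g : ℕ) : Set (Matrix (Fin g) (Fin g) ℂ) :=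
  {Ω | Ωᵀ = Ω ∧ (Ω.map Complex.im).PosDef}

/-- The matrix `J = (0 I; -I 0)` over `ℤ`. -/
def Jmat (g : ℕ) : Matrix (Fin g ⊕ Fin g) (Fin g ⊕ Fin g) ℤ :=
  fromBlocks 0 1 (-1) 0

/-- The action of an integral `2g × 2g` matrix `γ = (a b; c d)` on `g × g` complex
matrices, `γ • Ω = (aΩ + b)(cΩ + d)⁻¹`. -/
noncomputable def siegelActZ {g : ℕ} (γ : Matrix (Fin g ⊕ Fin g) (Fin g ⊕ Fin g) ℤ)
    (Ω : Matrix (Fin g) (Fin g) ℂ) : Matrix (Fin g) (Fin g) ℂ :=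
  (γ.toBlocks₁₁.map (Int.cast : ℤ → ℂ) * Ω + γ.toBlocks₁₂.map (Int.cast : ℤ → ℂ)) *
    (γ.toBlocks₂₁.map (Int.cast : ℤ → ℂ) * Ω + γ.toBlocks₂₂.map (Int.cast : ℤ → ℂ))⁻¹

theorem finite_intMatrix_of_isCompact {m n : Type*} [Finite m] [Finite n]
    {K : Set (Matrix m n ℝ)} (hK : IsCompact K) :
    {γ : Matrix m n ℤ | γ.map (Int.cast : ℤ → ℝ) ∈ K}.Finite := by
  have hent : ∀ i j, {k : ℤ | (k : ℝ) ∈ (fun M : Matrix m n ℝ => M i j) '' K}.Finite := by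
    intro i j
    have hc : IsCompact ((fun M : Matrix m n ℝ => M i j) '' K) :=
      hK.image (continuous_id.matrix_elem i j)
    have := Int.isClosedEmbedding_coe_real.isCompact_preimage hc
    exact this.finite_of_discrete
  have := Set.Finite.pi' fun i => Set.Finite.pi' fun j => hent i j
  exact this.subset fun γ hγ i j => ⟨_, hγ, rfl⟩

theorem norm_apply_le_of_conjTranspose_mul_self {n : Type*} [Fintype n] {E : Matrix n n ℂ}
    {Y : Matrix n n ℝ} (h : Eᴴ * E = Y.map Complex.ofReal) (i j : n) :
    ‖E i j‖ ≤ √(Y j j) := by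
  apply Real.le_sqrt_of_sq_le
  have h1 := congrFun (congrFun h j) j
  have h2 : ∑ k, ‖E k j‖ ^ 2 = Y j j := by
    have h3 : ((∑ k, ‖E k j‖ ^ 2 : ℝ) : ℂ) = (Y j j : ℂ) := by
      rw [Matrix.mul_apply] at h1
      simp only [conjTranspose_apply, map_apply] at h1
      rw [← h1]
      push_cast
      refine Finset.sum_congr rfl fun k _ => ?_
      exact (Complex.conj_mul' (E k j)).symm
    exact_mod_cast h3
  rw [← h2]
  exact Finset.single_le_sum (f := fun k => ‖E k j‖ ^ 2) (fun k _ => sq_nonneg _)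
    (Finset.mem_univ i)

/-- A real pair `(p, q)` is determined by `p Ω + q` when `Im Ω` is invertible. -/
theorem eq_of_mul_add_eq {g : ℕ} {Ω M : Matrix (Fin g) (Fin g) ℂ}
    {p q : Matrix (Fin g) (Fin g) ℤ} (hY : IsUnit (Ω.map Complex.im))
    (h : p.map (Int.cast : ℤ → ℂ) * Ω + q.map (Int.cast : ℤ → ℂ) = M) :
    p.map (Int.cast : ℤ → ℝ) = M.map Complex.im * (Ω.map Complex.im)⁻¹ ∧
      q.map (Int.cast : ℤ → ℝ) =
        M.map Complex.re - M.map Complex.im * (Ω.map Complex.im)⁻¹ * Ω.map Complex.re := by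
  have him : p.map (Int.cast : ℤ → ℝ) * Ω.map Complex.im = M.map Complex.im := by
    rw [← h]; ext i j; simp [Matrix.mul_apply]
  have hre : p.map (Int.cast : ℤ → ℝ) * Ω.map Complex.re + q.map (Int.cast : ℤ → ℝ)
      = M.map Complex.re := by
    rw [← h]; ext i j; simp [Matrix.mul_apply]
  have hp : p.map (Int.cast : ℤ → ℝ) = M.map Complex.im * (Ω.map Complex.im)⁻¹ := by
    rw [← him, Matrix.mul_nonsing_inv_cancel_right _ _ ((Matrix.isUnit_iff_isUnit_det _).1 hY)]
  exact ⟨hp, by rw [← hp, ← hre, add_sub_cancel_left]⟩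

/-- A matrix fixing `Ω` satisfies `aΩ + b = Ω(cΩ + d)`. If `cΩ + d` were singular, its inverse would
be the junk value `0`, forcing `Ω = 0`, which is impossible for `g > 0`. -/
theorem num_eq_mul_denom {g : ℕ} {Ω : Matrix (Fin g) (Fin g) ℂ}
    (hΩ : Ω ∈ SiegelUpperHalfSpace g) {γ : Matrix (Fin g ⊕ Fin g) (Fin g ⊕ Fin g) ℤ}
    (h : siegelActZ γ Ω = Ω) :
    γ.toBlocks₁₁.map (Int.cast : ℤ → ℂ) * Ω + γ.toBlocks₁₂.map (Int.cast : ℤ → ℂ) =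
      Ω * (γ.toBlocks₂₁.map (Int.cast : ℤ → ℂ) * Ω + γ.toBlocks₂₂.map (Int.cast : ℤ → ℂ)) := by
  unfold siegelActZ at h
  by_cases hD : IsUnit
      (γ.toBlocks₂₁.map (Int.cast : ℤ → ℂ) * Ω + γ.toBlocks₂₂.map (Int.cast : ℤ → ℂ)).det
  · conv_rhs => rw [← h]
    conv_lhs => rw [← Matrix.nonsing_inv_mul_cancel_right _
      (γ.toBlocks₁₁.map (Int.cast : ℤ → ℂ) * Ω + γ.toBlocks₁₂.map (Int.cast : ℤ → ℂ)) hD]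
    rw [h]
  · rw [Matrix.nonsing_inv_apply_not_isUnit _ hD, Matrix.mul_zero] at h
    ext i
    have := hΩ.2.diag_pos (i := i)
    simp [← h] at this

/-- The automorphy factor `cΩ + d` of a symplectic matrix fixing `Ω` preserves `Im Ω` as a
Hermitian form. -/
theorem conjTranspose_mul_im_mul {g : ℕ} {Ω : Matrix (Fin g) (Fin g) ℂ} (hsymm : Ωᵀ = Ω)
    {γ : Matrix (Fin g ⊕ Fin g) (Fin g ⊕ Fin g) ℤ} (hγ : γᵀ * Jmat g * γ = Jmat g)
    {D : Matrix (Fin g) (Fin g) ℂ}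
    (h₁ : γ.toBlocks₁₁.map (Int.cast : ℤ → ℂ) * Ω + γ.toBlocks₁₂.map (Int.cast : ℤ → ℂ) = Ω * D)
    (h₂ : γ.toBlocks₂₁.map (Int.cast : ℤ → ℂ) * Ω + γ.toBlocks₂₂.map (Int.cast : ℤ → ℂ) = D) :
    Dᴴ * (Ω.map Complex.im).map Complex.ofReal * D = (Ω.map Complex.im).map Complex.ofReal := by
  set G : Matrix (Fin g ⊕ Fin g) (Fin g ⊕ Fin g) ℂ := γ.map (Int.cast : ℤ → ℂ) with hG
  set J : Matrix (Fin g ⊕ Fin g) (Fin g ⊕ Fin g) ℂ := fromBlocks 0 1 (-1) 0 with hJ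
  have hJmap : (Jmat g).map (Int.cast : ℤ → ℂ) = J := by
    simp [Jmat, hJ, fromBlocks_map, Matrix.map_neg]
  have hGJ : Gᴴ * J * G = J := by
    have h := congrArg (fun M => M.map (Int.castRingHom ℂ)) hγ
    simp only [Matrix.map_mul] at h
    simp only [Int.coe_castRingHom, hJmap] at h
    have hT : Gᴴ = γᵀ.map (Int.cast : ℤ → ℂ) := by
      ext i j; simp [hG]
    rw [hT]; exact h
  set P : Matrix (Fin g ⊕ Fin g) (Fin g) ℂ := fromRows Ω 1 with hP
  have hGP : G * P = P * D := by
    have hb : G = fromBlocks (γ.toBlocks₁₁.map (Int.cast : ℤ → ℂ))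
        (γ.toBlocks₁₂.map (Int.cast : ℤ → ℂ)) (γ.toBlocks₂₁.map (Int.cast : ℤ → ℂ))
        (γ.toBlocks₂₂.map (Int.cast : ℤ → ℂ)) := by
      rw [← fromBlocks_map, fromBlocks_toBlocks]
    rw [hb, hP, fromBlocks_mul_fromRows, fromRows_mul, Matrix.mul_one, Matrix.mul_one, Matrix.one_mul,
      h₁, h₂]
  have hPJP : Pᴴ * J * P =
      (-2 * Complex.I) • (Ω.map Complex.im).map Complex.ofReal := by
    rw [Matrix.mul_assoc, hJ, hP, fromBlocks_mul_fromRows,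
      conjTranspose_fromRows_eq_fromCols_conjTranspose, fromCols_mul_fromRows]
    ext i j
    have hs : Ω j i = Ω i j := congrFun (congrFun hsymm i) j
    apply Complex.ext <;> simp [hs]
    ring
  have key : Dᴴ * (Pᴴ * J * P) * D =
      Pᴴ * J * P := by
    calc Dᴴ * (Pᴴ * J * P) * D
        = (P * D)ᴴ * J * (P * D) := by
          simp only [conjTranspose_mul, Matrix.mul_assoc]
      _ = Pᴴ * (Gᴴ * J * G) * P := by
          rw [← hGP]; simp only [conjTranspose_mul, Matrix.mul_assoc]
      _ = _ := by rw [hGJ]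
  rw [hPJP, Matrix.mul_smul, Matrix.smul_mul] at key
  exact smul_right_injective _ (by simp : (-2 * Complex.I) ≠ 0) key

/-- A positive definite real matrix factors as `BᵀB` with `B` invertible, read over `ℂ`. -/
theorem exists_conjTranspose_mul_self_eq {g : ℕ} {Y : Matrix (Fin g) (Fin g) ℝ} (hY : Y.PosDef) :
    ∃ B : Matrix (Fin g) (Fin g) ℂ, IsUnit B.det ∧ Y.map Complex.ofReal = Bᴴ * B := by
  open scoped MatrixOrder in
  obtain ⟨B, hB, h⟩ := CStarAlgebra.isStrictlyPositive_iff_eq_star_mul_self.mp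
    hY.isStrictlyPositive
  refine ⟨B.map Complex.ofRealHom, ?_, ?_⟩
  · have := ((Matrix.isUnit_iff_isUnit_det _).1 hB).map Complex.ofRealHom
    rwa [RingHom.map_det] at this
  · have hT : (B.map Complex.ofRealHom)ᴴ = (star B).map Complex.ofRealHom := by
      ext i j; simp [Matrix.star_apply]
    rw [hT, ← Matrix.map_mul, ← h]; rfl

/-- For every `Ω ∈ ℌ_g`, the stabilizer of `Ω` in `Sp(2g, ℤ)` is finite. -/
theorem sp_stabilizer_finite (g : ℕ) (Ω : Matrix (Fin g) (Fin g) ℂ)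
    (hΩ : Ω ∈ SiegelUpperHalfSpace g) :
    {γ : Matrix (Fin g ⊕ Fin g) (Fin g ⊕ Fin g) ℤ |
      γᵀ * Jmat g * γ = Jmat g ∧ siegelActZ γ Ω = Ω}.Finite := by

  obtain ⟨B, hB, hBY⟩ := exists_conjTranspose_mul_self_eq hΩ.2
  set X := Ω.map Complex.re
  set Y := Ω.map Complex.im with hYdef
  have hY : IsUnit Y := hΩ.2.isUnit
  -- The coefficients of `B D` lie in the compact polydisc `K`, and `F` recovers `γ` from `B D`.
  let K : Set (Matrix (Fin g) (Fin g) ℂ) :=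
    Set.univ.pi fun _ => Set.univ.pi fun j => Metric.closedBall 0 √(Y j j)
  have hK : IsCompact K :=
    isCompact_univ_pi fun _ => isCompact_univ_pi fun _ => isCompact_closedBall _ _
  let F : Matrix (Fin g) (Fin g) ℂ → Matrix (Fin g ⊕ Fin g) (Fin g ⊕ Fin g) ℝ := fun E =>
    fromBlocks ((Ω * (B⁻¹ * E)).map Complex.im * Y⁻¹)
      ((Ω * (B⁻¹ * E)).map Complex.re - (Ω * (B⁻¹ * E)).map Complex.im * Y⁻¹ * X)
      ((B⁻¹ * E).map Complex.im * Y⁻¹)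
      ((B⁻¹ * E).map Complex.re - (B⁻¹ * E).map Complex.im * Y⁻¹ * X)
  have hF : Continuous F := by
    have hD : Continuous fun E : Matrix (Fin g) (Fin g) ℂ => B⁻¹ * E :=
      continuous_const.matrix_mul continuous_id
    have hN : Continuous fun E : Matrix (Fin g) (Fin g) ℂ => Ω * (B⁻¹ * E) :=
      continuous_const.matrix_mul hD
    have hp : ∀ M : Matrix (Fin g) (Fin g) ℂ → Matrix (Fin g) (Fin g) ℂ, Continuous M →
        Continuous fun E => (M E).map Complex.im * Y⁻¹ := fun M hM =>
      (hM.matrix_map Complex.continuous_im).matrix_mul continuous_const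
    have hq : ∀ M : Matrix (Fin g) (Fin g) ℂ → Matrix (Fin g) (Fin g) ℂ, Continuous M →
        Continuous fun E => (M E).map Complex.re - (M E).map Complex.im * Y⁻¹ * X := fun M hM =>
      (hM.matrix_map Complex.continuous_re).sub ((hp M hM).matrix_mul continuous_const)
    exact (hp _ hN).matrix_fromBlocks (hq _ hN) (hp _ hD) (hq _ hD)
  refine (finite_intMatrix_of_isCompact (hK.image hF)).subset ?_
  rintro γ ⟨hγ, hfix⟩
  have hN := num_eq_mul_denom hΩ hfix
  obtain ⟨D, hD⟩ : ∃ D, γ.toBlocks₂₁.map (Int.cast : ℤ → ℂ) * Ω +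
    γ.toBlocks₂₂.map (Int.cast : ℤ → ℂ) = D := ⟨_, rfl⟩
  rw [hD] at hN
  have hU := conjTranspose_mul_im_mul hΩ.1 hγ hN hD
  have hE : (B * D)ᴴ * (B * D) = Y.map Complex.ofReal := by
    rw [← hU, ← hYdef, hBY]; simp only [conjTranspose_mul, Matrix.mul_assoc]
  refine ⟨B * D, fun i _ j _ => ?_, ?_⟩
  · rw [mem_closedBall_zero_iff]
    exact norm_apply_le_of_conjTranspose_mul_self hE i j
  · obtain ⟨ha, hb⟩ := eq_of_mul_add_eq hY hN
    obtain ⟨hc, hd⟩ := eq_of_mul_add_eq hY hD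
    change fromBlocks _ _ _ _ = γ.map (Int.cast : ℤ → ℝ)
    rw [Matrix.nonsing_inv_mul_cancel_left _ _ hB, ← hb, ← ha, ← hd, ← hc, ← fromBlocks_map,
      fromBlocks_toBlocks]
end

section
/- Let N ≥ 3 be an integer. The principal congruence subgroup Γ_{2g}(N) acts freely on the Siegel upper half space ℌ_g: if γ ∈ Sp(2g, ℤ) satisfies γ ≡ I (mod N) and γ · Ω = Ω for some Ω ∈ ℌ_g, then γ = I, where γ = (a b; c d) acts by γ · Ω = (aΩ + b)(cΩ + d)⁻¹. -/
/-!
Put `Y = Im Ω` and `K = (Ω; 1)`, a `2g × g` matrix. If `γ` fixes `Ω`, then `γ K = K M` with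
`M = cΩ + d`, and since `Kᴴ J K = -2i Y` the symplectic relation gives `Mᴴ Y M = Y`. Hence `M` is
conjugate to a unitary matrix (`exists_unitary_conj`).

Write `γ = 1 + N B` with `B` integral, so that `B K = K M'` with `M' = (M - 1) / N`. As `M` is
conjugate to a unitary matrix, `M'` is conjugate to a normal matrix of norm at most `2 / N < 1`, so
`M' ^ k → 0` and therefore `B ^ k K = K M' ^ k → 0`. Because `Y` is invertible, a real matrix `A` is
controlled by `A K` (`eventually_zero_of_mul_period`), so the integral matrices `B ^ k` tend to `0`;
hence `B ^ k = 0` for some `k`. Then `M'` is nilpotent, and a nilpotent normal matrix vanishes.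
Thus `B K = K M' = 0`, which forces `B = 0` and `γ = 1`.
-/

open Matrix

open Filter Topology
open scoped Matrix.Norms.L2Operator

/-- The matrix `(Ω; 1)`, whose columns span the subspace attached to `Ω`. -/
def periodMat {g : ℕ} (Ω : Matrix (Fin g) (Fin g) ℂ) : Matrix (Fin g ⊕ Fin g) (Fin g) ℂ :=
  fromRows Ω 1

/-- A normal nilpotent element of a C⋆-algebra vanishes: its norm is its spectral radius. -/
lemma eq_zero_of_isStarNormal_of_pow_eq_zero {A : Type*} [CStarAlgebra A] (a : A)
    (ha : IsStarNormal a) {k : ℕ} (hk : a ^ k = 0) : a = 0 := by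
  have h1 : spectralRadius ℂ a = ‖a‖₊ := IsStarNormal.spectralRadius_eq_nnnorm a
  have h2 := spectrum.spectralRadius_le_pow_nnnorm_pow_one_div ℂ a k
  rw [h1, pow_succ, hk] at h2
  have h3 : (0 : ℝ) < 1 / (k + 1) := by positivity
  simpa [ENNReal.zero_rpow_of_pos, h3, Nat.cast_add_one_pos] using h2

/-- An isometry `M` of a positive definite form `Y = Sᵀ S` is conjugated by `S` into a unitary
matrix. -/
lemma exists_unitary_conj {g : ℕ} {Y : Matrix (Fin g) (Fin g) ℝ} (hY : Y.PosDef)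
    {M : Matrix (Fin g) (Fin g) ℂ}
    (hM : Mᴴ * Y.map (algebraMap ℝ ℂ) * M = Y.map (algebraMap ℝ ℂ)) :
    ∃ R : (Matrix (Fin g) (Fin g) ℂ)ˣ,
      (R : Matrix (Fin g) (Fin g) ℂ) * M * (R⁻¹ : (Matrix (Fin g) (Fin g) ℂ)ˣ) ∈
        unitary (Matrix (Fin g) (Fin g) ℂ) := by
  obtain ⟨S, hS⟩ : ∃ S : Matrix (Fin g) (Fin g) ℝ, Y = Sᵀ * S := by
    open scoped MatrixOrder in
    obtain ⟨S, hS⟩ := CStarAlgebra.nonneg_iff_eq_star_mul_self.mp hY.posSemidef.nonneg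
    exact ⟨S, by simpa [star_eq_conjTranspose] using hS⟩
  have hSu : IsUnit S := by
    rw [Matrix.isUnit_iff_isUnit_det, isUnit_iff_ne_zero]
    intro h
    have := hY.det_pos
    rw [hS, det_mul, h] at this
    simp at this
  have hRu : IsUnit (S.map (algebraMap ℝ ℂ)) := hSu.map (algebraMap ℝ ℂ).mapMatrix
  obtain ⟨R, hR⟩ := hRu
  have hRY : Y.map (algebraMap ℝ ℂ) = (R : Matrix (Fin g) (Fin g) ℂ)ᴴ * R := by
    rw [hR, hS, Matrix.map_mul]
    congr 1
    ext i j
    simp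
  have hinv : (R : Matrix (Fin g) (Fin g) ℂ) * (R⁻¹ : (Matrix (Fin g) (Fin g) ℂ)ˣ) = 1 :=
    R.mul_inv
  have hinv' : ((R⁻¹ : (Matrix (Fin g) (Fin g) ℂ)ˣ) : Matrix (Fin g) (Fin g) ℂ)ᴴ *
      (R : Matrix (Fin g) (Fin g) ℂ)ᴴ = 1 := by
    rw [← conjTranspose_mul, hinv, conjTranspose_one]
  refine ⟨R, ?_⟩
  have h : star ((R : Matrix (Fin g) (Fin g) ℂ) * M * (R⁻¹ : (Matrix (Fin g) (Fin g) ℂ)ˣ)) *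
      ((R : Matrix (Fin g) (Fin g) ℂ) * M * (R⁻¹ : (Matrix (Fin g) (Fin g) ℂ)ˣ)) = 1 := by
    rw [star_eq_conjTranspose, conjTranspose_mul, conjTranspose_mul]
    rw [hRY] at hM
    calc _ = ((R⁻¹ : (Matrix (Fin g) (Fin g) ℂ)ˣ) : Matrix (Fin g) (Fin g) ℂ)ᴴ *
          (Mᴴ * ((R : Matrix (Fin g) (Fin g) ℂ)ᴴ * R) * M) *
          (R⁻¹ : (Matrix (Fin g) (Fin g) ℂ)ˣ) := by simp only [Matrix.mul_assoc]
      _ = (((R⁻¹ : (Matrix (Fin g) (Fin g) ℂ)ˣ) : Matrix (Fin g) (Fin g) ℂ)ᴴ *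
          (R : Matrix (Fin g) (Fin g) ℂ)ᴴ) * (R * (R⁻¹ : (Matrix (Fin g) (Fin g) ℂ)ˣ)) := by
        rw [hM]; simp only [Matrix.mul_assoc]
      _ = 1 := by rw [hinv, hinv', Matrix.one_mul]
  exact ⟨h, mul_eq_one_comm.mp h⟩

/-- If `1 + N M'` preserves a positive definite form and `N ≥ 3`, then `M'` is conjugate to a
normal matrix of norm at most `2 / N < 1`; so its powers tend to `0`, and it vanishes if nilpotent. -/
lemma tendsto_pow_and_reduced {g N : ℕ} (hN : 3 ≤ N) {Y : Matrix (Fin g) (Fin g) ℝ}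
    (hY : Y.PosDef) {M' : Matrix (Fin g) (Fin g) ℂ}
    (hM : (1 + (N : ℂ) • M')ᴴ * Y.map (algebraMap ℝ ℂ) * (1 + (N : ℂ) • M') =
      Y.map (algebraMap ℝ ℂ)) :
    Tendsto (fun k => M' ^ k) atTop (𝓝 0) ∧ ∀ k, M' ^ k = 0 → M' = 0 := by
  rcases subsingleton_or_nontrivial (Matrix (Fin g) (Fin g) ℂ) with hs | hs
  · exact ⟨by simp [Subsingleton.elim _ (0 : Matrix (Fin g) (Fin g) ℂ)],
      fun _ _ => Subsingleton.elim _ _⟩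
  obtain ⟨R, hR⟩ := exists_unitary_conj hY hM
  set U : Matrix (Fin g) (Fin g) ℂ := R * (1 + (N : ℂ) • M') *
    (R⁻¹ : (Matrix (Fin g) (Fin g) ℂ)ˣ) with hU
  set V : Matrix (Fin g) (Fin g) ℂ := R * M' * (R⁻¹ : (Matrix (Fin g) (Fin g) ℂ)ˣ) with hV
  have hN0 : (N : ℂ) ≠ 0 := by exact_mod_cast (by omega : N ≠ 0)
  have hUV : U = 1 + (N : ℂ) • V := by
    simp [hU, hV, mul_add, add_mul]
  have hVU : V = (N : ℂ)⁻¹ • (U - 1) := by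
    rw [hUV, add_sub_cancel_left, smul_smul, inv_mul_cancel₀ hN0, one_smul]
  have hMV : ∀ k, M' ^ k = (R⁻¹ : (Matrix (Fin g) (Fin g) ℂ)ˣ) * V ^ k * R := by
    intro k
    rw [hV, Units.conj_pow]
    simp [mul_assoc]
  have hVnorm : ‖V‖ < 1 := by
    have h1 : ‖U - 1‖ ≤ 2 := by
      refine (norm_sub_le _ _).trans ?_
      rw [CStarRing.norm_of_mem_unitary hR, CStarRing.norm_one]
      norm_num
    have h3 : (3 : ℝ) ≤ N := by exact_mod_cast hN
    rw [hVU, norm_smul, norm_inv, Complex.norm_natCast, inv_mul_lt_iff₀ (by linarith)]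
    linarith
  have hVnormal : IsStarNormal V := by
    constructor
    have h1 := hR.1
    have h2 := hR.2
    rw [hVU]
    simp only [star_smul, star_sub, star_one]
    refine Commute.smul_left (Commute.smul_right ?_ _) _
    refine Commute.sub_left (Commute.sub_right ?_ (Commute.one_right _)) (Commute.one_left _)
    exact h1.trans h2.symm
  constructor
  · have := tendsto_pow_atTop_nhds_zero_of_norm_lt_one hVnorm
    have h2 := (this.const_mul ((R⁻¹ : (Matrix (Fin g) (Fin g) ℂ)ˣ) :
      Matrix (Fin g) (Fin g) ℂ)).mul_const (R : Matrix (Fin g) (Fin g) ℂ)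
    simpa [hMV] using h2
  · intro k hk
    have hVk : V ^ k = 0 := by
      rw [hV, Units.conj_pow, hk]; simp
    have hV0 := eq_zero_of_isStarNormal_of_pow_eq_zero V hVnormal hVk
    have := hMV 1
    simpa [hV0] using this

/-- Integral matrices `A n` vanish eventually as soon as `A n * (Ω; 1)` tends to zero: the imaginary
part of `A n * (Ω; 1)` is the left half of `A n` times the invertible matrix `Im Ω`, so the left
half tends to zero, and then so does the right half. -/
lemma eventually_zero_of_mul_period {g : ℕ} {Ω : Matrix (Fin g) (Fin g) ℂ}
    (hY : (Ω.map Complex.im).PosDef)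
    (A : ℕ → Matrix (Fin g ⊕ Fin g) (Fin g ⊕ Fin g) ℤ)
    (hA : Tendsto (fun n => (A n).map (Int.cast : ℤ → ℂ) * periodMat Ω) atTop (𝓝 0)) :
    ∀ᶠ n in atTop, A n = 0 := by
  set Y := Ω.map Complex.im with hYdef
  have hYdet : IsUnit Y.det := isUnit_iff_ne_zero.mpr hY.det_pos.ne'
  have hmul : ∀ n, (A n).map (Int.cast : ℤ → ℂ) * periodMat Ω =
      ((A n).toCols₁.map (Int.cast : ℤ → ℂ)) * Ω + (A n).toCols₂.map (Int.cast : ℤ → ℂ) := by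
    intro n
    have : (A n).map (Int.cast : ℤ → ℂ) = fromCols ((A n).toCols₁.map (Int.cast : ℤ → ℂ))
        ((A n).toCols₂.map (Int.cast : ℤ → ℂ)) := by
      ext i (j | j) <;> rfl
    rw [this, periodMat, fromCols_mul_fromRows, Matrix.mul_one]
  simp only [hmul] at hA
  have him : Tendsto (fun n => (A n).toCols₁.map (Int.cast : ℤ → ℝ) * Y) atTop (𝓝 0) := by
    have h1 := ((continuous_id.matrix_map Complex.continuous_im).tendsto _).comp hA
    refine (h1.congr fun n => ?_).trans_eq ?_
    · ext i j
      simp [Matrix.mul_apply, hYdef]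
    · simp
  have hL : Tendsto (fun n => (A n).toCols₁.map (Int.cast : ℤ → ℝ)) atTop (𝓝 0) := by
    have h1 := (((continuous_id.matrix_mul (continuous_const (y := Y⁻¹))).tendsto _).comp him)
    simpa [Function.comp_def, Matrix.mul_assoc, Matrix.mul_nonsing_inv _ hYdet] using h1
  have hLC : Tendsto (fun n => (A n).toCols₁.map (Int.cast : ℤ → ℂ)) atTop (𝓝 0) := by
    have h1 := ((continuous_id.matrix_map Complex.continuous_ofReal).tendsto _).comp hL
    simpa [Function.comp_def, Matrix.map_map] using h1
  have hRC : Tendsto (fun n => (A n).toCols₂.map (Int.cast : ℤ → ℂ)) atTop (𝓝 0) := by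
    have h1 := (((continuous_id.matrix_mul (continuous_const (y := Ω))).tendsto _).comp hLC)
    simpa [Function.comp_def] using hA.sub h1
  have hint : ∀ f : ℕ → ℤ, Tendsto (fun n => (f n : ℂ)) atTop (𝓝 0) → ∀ᶠ n in atTop, f n = 0 := by
    intro f hf
    have h1 := (tendsto_zero_iff_norm_tendsto_zero.mp hf).eventually_lt_const one_pos
    filter_upwards [h1] with n hn
    rw [Complex.norm_intCast] at hn
    exact Int.abs_lt_one_iff.mp (by exact_mod_cast hn)
  have hent : ∀ i j, ∀ᶠ n in atTop, A n i j = 0 := by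
    rintro i (j | j)
    · exact hint _ (by simpa [Function.comp_def] using ((continuous_id.matrix_elem i j).tendsto _).comp hLC)
    · exact hint _ (by simpa [Function.comp_def] using ((continuous_id.matrix_elem i j).tendsto _).comp hRC)
  filter_upwards [eventually_all.mpr fun i => eventually_all.mpr (hent i)] with n hn
  ext i j
  exact hn i j

lemma period_conj_J {g : ℕ} {Ω : Matrix (Fin g) (Fin g) ℂ} (hΩ : Ωᵀ = Ω) :
    (periodMat Ω)ᴴ * (Jmat g).map (Int.cast : ℤ → ℂ) * periodMat Ω =
      (-2 * Complex.I) • (Ω.map Complex.im).map (algebraMap ℝ ℂ) := by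
  have hJ : (Jmat g).map (Int.cast : ℤ → ℂ) = fromBlocks 0 1 (-1) 0 := by
    rw [Jmat, fromBlocks_map]
    congr 1 <;> ext i j <;> simp [Matrix.one_apply]
  have h : (periodMat Ω)ᴴ * (Jmat g).map (Int.cast : ℤ → ℂ) * periodMat Ω = Ωᴴ - Ω := by
    rw [hJ, periodMat, conjTranspose_fromRows_eq_fromCols_conjTranspose, Matrix.mul_assoc,
      fromBlocks_mul_fromRows, fromCols_mul_fromRows]
    simp [sub_eq_add_neg]
  rw [h]
  ext i j
  have hs : Ω j i = Ω i j := congrFun (congrFun hΩ i) j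
  apply Complex.ext <;> simp [hs]
  ring

/-- For `N ≥ 3`, the principal congruence subgroup `Γ_{2g}(N)` acts freely on `ℌ_g`:
if `γ ∈ Sp(2g, ℤ)` with `γ ≡ I (mod N)` fixes some `Ω ∈ ℌ_g`, then `γ = I`. -/
theorem congruence_subgroup_acts_freely (g N : ℕ) (hN : 3 ≤ N)
    (γ : Matrix (Fin g ⊕ Fin g) (Fin g ⊕ Fin g) ℤ)
    (hγ : γᵀ * Jmat g * γ = Jmat g)
    (hcong : ∀ i j, (N : ℤ) ∣ (γ - 1) i j)
    (Ω : Matrix (Fin g) (Fin g) ℂ) (hΩ : Ω ∈ SiegelUpperHalfSpace g)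
    (hfix : siegelActZ γ Ω = Ω) :
    γ = 1 := by
  obtain ⟨hsymm, hY⟩ := hΩ
  rcases Nat.eq_zero_or_pos g with rfl | hg
  · exact Subsingleton.elim _ _
  set M : Matrix (Fin g) (Fin g) ℂ :=
    γ.toBlocks₂₁.map (Int.cast : ℤ → ℂ) * Ω + γ.toBlocks₂₂.map (Int.cast : ℤ → ℂ) with hMdef
  -- If `M` were singular, its junk inverse `0` would give `Ω = 0`, contradicting `Im Ω > 0`.
  have hMdet : IsUnit M.det := by
    by_contra hdet
    have h0 : Ω = 0 := by
      rw [← hfix, siegelActZ, ← hMdef, nonsing_inv_apply_not_isUnit _ hdet, Matrix.mul_zero]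
    have : Nonempty (Fin g) := ⟨⟨0, hg⟩⟩
    have hpos := hY.det_pos
    rw [h0, Matrix.map_zero _ Complex.zero_im, det_zero] at hpos
    exact lt_irrefl _ hpos
  have htop : γ.toBlocks₁₁.map (Int.cast : ℤ → ℂ) * Ω + γ.toBlocks₁₂.map (Int.cast : ℤ → ℂ) =
      Ω * M := by
    conv_rhs => rw [← hfix, siegelActZ, ← hMdef]
    rw [Matrix.mul_assoc, Matrix.nonsing_inv_mul _ hMdet, Matrix.mul_one]
  have hγK : γ.map (Int.cast : ℤ → ℂ) * periodMat Ω = periodMat Ω * M := by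
    have h1 : γ.map (Int.cast : ℤ → ℂ) = fromBlocks (γ.toBlocks₁₁.map (Int.cast : ℤ → ℂ))
        (γ.toBlocks₁₂.map (Int.cast : ℤ → ℂ)) (γ.toBlocks₂₁.map (Int.cast : ℤ → ℂ))
        (γ.toBlocks₂₂.map (Int.cast : ℤ → ℂ)) := by
      rw [← fromBlocks_map, fromBlocks_toBlocks]
    rw [h1, periodMat, fromBlocks_mul_fromRows, fromRows_mul, Matrix.mul_one, Matrix.mul_one,
      Matrix.one_mul, htop, hMdef]
  have hMY : Mᴴ * (Ω.map Complex.im).map (algebraMap ℝ ℂ) * M =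
      (Ω.map Complex.im).map (algebraMap ℝ ℂ) := by
    have hγC : (γ.map (Int.cast : ℤ → ℂ))ᴴ * (Jmat g).map (Int.cast : ℤ → ℂ) *
        γ.map (Int.cast : ℤ → ℂ) = (Jmat g).map (Int.cast : ℤ → ℂ) := by
      have h1 : (γ.map (Int.cast : ℤ → ℂ))ᴴ = γᵀ.map (Int.cast : ℤ → ℂ) := by
        ext i j; simp
      have h2 := congrArg (Int.castRingHom ℂ).mapMatrix hγ
      rw [map_mul, map_mul] at h2
      rw [h1]
      exact h2
    have h2 : (-2 * Complex.I) ≠ 0 := by simp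
    apply smul_right_injective _ h2
    calc (-2 * Complex.I) • (Mᴴ * (Ω.map Complex.im).map (algebraMap ℝ ℂ) * M)
        = Mᴴ * ((-2 * Complex.I) • (Ω.map Complex.im).map (algebraMap ℝ ℂ)) * M := by
          rw [Matrix.mul_smul, Matrix.smul_mul]
      _ = (periodMat Ω * M)ᴴ * (Jmat g).map (Int.cast : ℤ → ℂ) * (periodMat Ω * M) := by
          rw [← period_conj_J hsymm, conjTranspose_mul]
          simp only [Matrix.mul_assoc]
      _ = (periodMat Ω)ᴴ * ((γ.map (Int.cast : ℤ → ℂ))ᴴ * (Jmat g).map (Int.cast : ℤ → ℂ) *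
            γ.map (Int.cast : ℤ → ℂ)) * periodMat Ω := by
          rw [← hγK, conjTranspose_mul]
          simp only [Matrix.mul_assoc]
      _ = _ := by rw [hγC, period_conj_J hsymm]
  choose B hB using hcong
  have hγB : γ = 1 + (N : ℤ) • (Matrix.of B) := by
    ext i j
    have := hB i j
    rw [Matrix.sub_apply] at this
    simp only [Matrix.add_apply, Matrix.smul_apply, Matrix.of_apply, smul_eq_mul]
    linarith
  generalize Matrix.of B = B' at hγB
  have hN0 : (N : ℂ) ≠ 0 := by exact_mod_cast (by omega : N ≠ 0)
  obtain ⟨M', hM'⟩ : ∃ M' : Matrix (Fin g) (Fin g) ℂ, M = 1 + (N : ℂ) • M' :=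
    ⟨(N : ℂ)⁻¹ • (M - 1), by rw [smul_smul, mul_inv_cancel₀ hN0, one_smul, add_sub_cancel]⟩
  have hγBC : γ.map (Int.cast : ℤ → ℂ) = 1 + (N : ℂ) • B'.map (Int.cast : ℤ → ℂ) := by
    rw [hγB]
    ext i j
    rw [Matrix.map_apply, Matrix.add_apply, Matrix.add_apply, Matrix.smul_apply, Matrix.smul_apply]
    simp [Matrix.one_apply]
  have hBK : B'.map (Int.cast : ℤ → ℂ) * periodMat Ω = periodMat Ω * M' := by
    rw [hγBC, hM', Matrix.add_mul, Matrix.mul_add, Matrix.one_mul, Matrix.mul_one,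
      Matrix.smul_mul, Matrix.mul_smul] at hγK
    exact smul_right_injective _ hN0 (add_left_cancel hγK)
  have hpow : ∀ k, (B' ^ k).map (Int.cast : ℤ → ℂ) * periodMat Ω = periodMat Ω * M' ^ k := by
    have hmap : ∀ k, (B' ^ k).map (Int.cast : ℤ → ℂ) = (B'.map (Int.cast : ℤ → ℂ)) ^ k :=
      fun k => map_pow (Int.castRingHom ℂ).mapMatrix B' k
    intro k
    rw [hmap]
    induction k with
    | zero => simp
    | succ k ih => rw [pow_succ, Matrix.mul_assoc, hBK, ← Matrix.mul_assoc, ih, Matrix.mul_assoc,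
        ← pow_succ]
  rw [hM'] at hMY
  obtain ⟨htend, hred⟩ := tendsto_pow_and_reduced hN hY hMY
  have hev := eventually_zero_of_mul_period hY (fun k => B' ^ k) (by
    have h1 := (((continuous_const (y := periodMat Ω)).matrix_mul continuous_id).tendsto _).comp
      htend
    simpa [Function.comp_def, hpow] using h1)
  obtain ⟨k, hk⟩ := hev.exists
  have hM0 : M' = 0 := by
    apply hred k
    have h1 := hpow k
    rw [hk, Matrix.map_zero _ Int.cast_zero, Matrix.zero_mul, periodMat, fromRows_mul,
      Matrix.one_mul] at h1
    have h2 := congrArg toRows₂ h1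
    rw [toRows₂_fromRows] at h2
    exact h2.symm
  have hev' := eventually_zero_of_mul_period hY (fun _ => B') (by
    simp only [hBK, hM0, Matrix.mul_zero]
    exact tendsto_const_nhds)
  obtain ⟨_, hB0⟩ := hev'.exists
  rw [hγB, hB0, smul_zero, add_zero]
end
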